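/- Let μ be a probability measure on X = (ℝ^d)^N and g = (g_n)_{n=1}^N with each g_n: X → ℝ^d Borel, F_n-measurable and Σ_{n=1}^N E_μ[|g_n|_*^q] < ∞. Let H be the set of predictable processes h = (h_n)_{n=1}^N (each h_n: X → ℝ^d Borel and F_{n−1}-measurable) with Σ_{n=1}^N E_μ[|h_n|_*^q] < ∞, and let v: ℝ^d → ℝ^d be v(e) = (e_1 |e_1|^{q−2}, …, e_d |e_d|^{q−2}). Then the functional J[h] = Σ_{n=1}^N E_μ[|g_n − h_n|_*^q] attains its infimum over H at some h* ∈ H, this minimizer is unique up to modification on μ-null sets, and it satisfies the first-order condition E_μ[v(g_n − h*_n) | F_{n−1}] = 0 μ-a.s. for every n ∈ {1, …, N}. -/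

import Mathlib

open MeasureTheory Filter Set
open scoped ENNReal

noncomputable section

/-- Discrete path space `X = (ℝ^d)^N`. -/
abbrev PathD (N d : ℕ) : Type := Fin N → Fin d → ℝ

/-- The `ℓ_e` norm on `ℝ^d`. -/
def lpnorm {d : ℕ} (e : ℝ) (v : Fin d → ℝ) : ℝ := (∑ i, |v i| ^ e) ^ (1 / e)

/-- Coordinate `x_n` of a path, with the convention `x_0 = 0` (and `x_n = 0` for `n > N`). -/
def coord {N d : ℕ} (x : PathD N d) (n : ℕ) : Fin d → ℝ :=
  if h : 1 ≤ n ∧ n ≤ N then x ⟨n - 1, by omega⟩ else 0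

/-- The cost `c_N(x,y) = Σ_{n=1}^N |Δx_n − Δy_n|^p` (with `|·|` the `ℓ_p` norm). -/
def cN {N d : ℕ} (p : ℝ) (x y : PathD N d) : ℝ :=
  ∑ n ∈ Finset.Icc 1 N,
    lpnorm p ((coord x n - coord x (n - 1)) - (coord y n - coord y (n - 1))) ^ p

/-- The σ-algebra `F_n = σ(x_1, …, x_n)` on the discrete path space. -/
def Fn (N d n : ℕ) : MeasurableSpace (PathD N d) :=
  MeasurableSpace.comap (fun x (i : Fin N) => if (i : ℕ) + 1 ≤ n then x i else 0) inferInstance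

/-- Conditional independence of `m₁` and `m₂` given `m'` under `π`, expressed through
conditional expectations of indicators. -/
def CondIndepOn {Ω : Type*} [MeasurableSpace Ω] (π : Measure Ω)
    (m' m₁ m₂ : MeasurableSpace Ω) : Prop :=
  ∀ A B : Set Ω, MeasurableSet[m₁] A → MeasurableSet[m₂] B →
    (π[(A ∩ B).indicator (fun _ => (1 : ℝ)) | m']) =ᵐ[π]
      (π[A.indicator (fun _ => (1 : ℝ)) | m']) * (π[B.indicator (fun _ => (1 : ℝ)) | m'])

/-- `π` is a coupling with first marginal `μ` which is causal to its second marginal: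
for every `n`, `σ(Y_1,…,Y_n)` is conditionally independent of `σ(X_1,…,X_N)` given `F_n`. -/
def IsCausalStar {N d : ℕ} (μ : Measure (PathD N d))
    (π : Measure (PathD N d × PathD N d)) : Prop :=
  π.map Prod.fst = μ ∧
  ∀ n : ℕ, CondIndepOn π ((Fn N d n).comap Prod.fst)
    ((Fn N d n).comap Prod.snd) ((Fn N d N).comap Prod.fst)

/-- `π` is a causal coupling of `(μ, ν)`. -/
def IsCausalCoupling {N d : ℕ} (μ ν : Measure (PathD N d))
    (π : Measure (PathD N d × PathD N d)) : Prop :=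
  π.map Prod.snd = ν ∧ IsCausalStar μ π

/-- `π` is a bicausal coupling of `(μ, ν)`: both `π` and its swap are causal. -/
def IsBicausalCoupling {N d : ℕ} (μ ν : Measure (PathD N d))
    (π : Measure (PathD N d × PathD N d)) : Prop :=
  IsCausalCoupling μ ν π ∧
  (∀ n : ℕ, CondIndepOn π ((Fn N d n).comap Prod.snd)
    ((Fn N d n).comap Prod.fst) ((Fn N d N).comap Prod.snd))

/-- `μ` is a martingale measure on the discrete path space: every coordinate is integrable
and `E_μ[X_n | F_{n−1}] = X_{n−1}` a.s. (with `X_0 = 0`). -/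
def IsMartingaleMeasure {N d : ℕ} (μ : Measure (PathD N d)) : Prop :=
  ∀ n : ℕ, 1 ≤ n → n ≤ N →
    Integrable (fun x => coord x n) μ ∧
    (μ[(fun x => coord x n) | Fn N d (n - 1)]) =ᵐ[μ] (fun x => coord x (n - 1))


/-- The discrete pathwise Malliavin derivative `𝔻_n f = Σ_{k=n}^N ∂_k f`, where `∂_k f` is the
`ℝ^d`-valued partial gradient of `f` in the `k`-th coordinate block (`k = 1, …, N`). -/
def Dn {N d : ℕ} (f : PathD N d → ℝ) (n : ℕ) (x : PathD N d) : Fin d → ℝ :=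
  fun j => ∑ k : Fin N, if n ≤ (k : ℕ) + 1 then
    fderiv ℝ f x (Pi.single k (Pi.single j 1)) else 0

/-- Standing assumptions on the penalty function `L : [0,∞) → [0,∞]`:
continuous, non-decreasing, `L(0) = 0` and `liminf_{u→∞} L(u)/u^p = +∞`. -/
structure PenaltyAssumptions (p : ℝ) (L : ℝ → ℝ≥0∞) : Prop where
  cont : ContinuousOn L (Set.Ici 0)
  mono : MonotoneOn L (Set.Ici 0)
  zero : L 0 = 0
  growth : Tendsto (fun u : ℝ => L u / ENNReal.ofReal (u ^ p)) atTop (nhds ⊤)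

/-- The convex conjugate `L*(v) = sup_{u ≥ 0} { u v − L(u) }`, valued in the extended reals. -/
def Lconj (L : ℝ → ℝ≥0∞) (v : ℝ) : EReal :=
  ⨆ u : {u : ℝ // 0 ≤ u}, ((u.1 * v : ℝ) : EReal) - ((L u.1 : ℝ≥0∞) : EReal)

/-- The expected transport cost `E_π[c_N(X,Y)]` of a coupling. -/
def costD {N d : ℕ} (p : ℝ) (π : Measure (PathD N d × PathD N d)) : ℝ :=
  ∫ z, cN p z.1 z.2 ∂π

/-- The penalised causal DRO value
`V(δ) = sup_{π ∈ Π_c(μ,*), E_π[c_N] < ∞} { E_π[f(Y)] − δ L(E_π[c_N(X,Y)]^{1/p}/δ) }`,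
valued in the extended reals. -/
def VD {N d : ℕ} (p : ℝ) (L : ℝ → ℝ≥0∞) (μ : Measure (PathD N d))
    (f : PathD N d → ℝ) (δ : ℝ) : EReal :=
  ⨆ π : {π : Measure (PathD N d × PathD N d) //
      IsProbabilityMeasure π ∧ IsCausalStar μ π ∧
      Integrable (fun z => cN p z.1 z.2) π},
    ((∫ z, f z.2 ∂π.1 : ℝ) : EReal) -
      ((ENNReal.ofReal δ * L ((costD p π.1) ^ (1 / p) / δ) : ℝ≥0∞) : EReal)

/-- The `L^q(μ)`-norm `(Σ_{n=1}^N E_μ[|E_μ[𝔻_n f(X)|F_n]|_*^q])^{1/q}` of the optional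
projection of the discrete pathwise Malliavin derivative. -/
def optionalNorm {N d : ℕ} (q : ℝ) (μ : Measure (PathD N d)) (f : PathD N d → ℝ) : ℝ :=
  (∑ n ∈ Finset.Icc 1 N, ∫ x, lpnorm q ((μ[Dn f n | Fn N d n]) x) ^ q ∂μ) ^ (1 / q)

/-- The map `v(e) = (e_1|e_1|^{q−2}, …, e_d|e_d|^{q−2})` on `ℝ^d`. -/
def vmap {d : ℕ} (q : ℝ) (e : Fin d → ℝ) : Fin d → ℝ :=
  fun i => e i * |e i| ^ (q - 2)

/-- The inverse `Δ^{-1}` of the increment map: `(Δ^{-1} y)_n = Σ_{k=1}^n y_k`. -/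
def DeltaInv {N d : ℕ} (y : PathD N d) : PathD N d :=
  fun i => ∑ k : Fin N, if (k : ℕ) ≤ (i : ℕ) then y k else 0

/-- A process `h = (h_n)_{n=1}^N` is predictable if `h_n` is `F_{n−1}`-measurable. -/
def IsPredictable {N d : ℕ} (h : ℕ → PathD N d → Fin d → ℝ) : Prop :=
  ∀ n : ℕ, 1 ≤ n → n ≤ N → Measurable[Fn N d (n - 1)] (h n)

end

open MeasureTheory

open ProbabilityTheory
open scoped Topology

/-- The odd power function `t ↦ t |t|^{q-2}`, a multiple of the derivative of `|t|^q`. -/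
noncomputable def signedPow (q t : ℝ) : ℝ := t * |t| ^ (q - 2)

lemma hasDerivAt_abs_rpow_signedPow {q : ℝ} (hq : 1 < q) (t : ℝ) :
    HasDerivAt (fun x : ℝ => |x| ^ q) (q * signedPow q t) t := by
  convert hasDerivAt_abs_rpow t hq using 1
  unfold signedPow
  ring

lemma signedPow_neg (q t : ℝ) : signedPow q (-t) = -signedPow q t := by
  simp [signedPow]

lemma signedPow_of_nonneg {q : ℝ} (hq : 1 < q) {t : ℝ} (ht : 0 ≤ t) :
    signedPow q t = t ^ (q - 1) := by
  rcases ht.eq_or_lt with rfl | ht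
  · simp [signedPow, Real.zero_rpow (by linarith : q - 1 ≠ 0)]
  · rw [signedPow, abs_of_pos ht, show q - 1 = 1 + (q - 2) by ring, Real.rpow_add ht,
      Real.rpow_one]

lemma abs_signedPow {q : ℝ} (hq : 1 < q) (t : ℝ) : |signedPow q t| = |t| ^ (q - 1) := by
  rw [← signedPow_of_nonneg hq (abs_nonneg t)]
  simp [signedPow, abs_mul, abs_of_nonneg (Real.rpow_nonneg (abs_nonneg t) _)]

lemma strictMono_signedPow {q : ℝ} (hq : 1 < q) : StrictMono (signedPow q) := by
  refine strictMono_of_odd_strictMonoOn_nonneg (signedPow_neg q) fun x hx y hy hxy => ?_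
  rw [signedPow_of_nonneg hq hx, signedPow_of_nonneg hq hy]
  exact Real.rpow_lt_rpow hx hxy (by linarith)

lemma continuous_signedPow {q : ℝ} (hq : 1 < q) : Continuous (signedPow q) := by
  have h : Continuous (deriv fun x : ℝ => |x| ^ q) :=
    (contDiff_norm_rpow (E := ℝ) hq).continuous_deriv le_rfl
  have h' : (deriv fun x : ℝ => |x| ^ q) = fun t => q * signedPow q t :=
    funext fun t => (hasDerivAt_abs_rpow_signedPow hq t).deriv
  rw [h'] at h
  refine (h.const_mul q⁻¹).congr fun t => ?_
  field_simp

lemma continuous_abs_rpow {q : ℝ} (hq : 1 < q) : Continuous fun t : ℝ => |t| ^ q :=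
  continuous_abs.rpow_const fun _ => Or.inr (by linarith)

lemma abs_rpow_add_signedPow_mul_lt {q : ℝ} (hq : 1 < q) {a b : ℝ} (hab : a ≠ b) :
    |a| ^ q + q * (signedPow q a * (b - a)) < |b| ^ q := by
  have hconv : StrictConvexOn ℝ Set.univ fun x : ℝ => |x| ^ q := by
    refine StrictMono.strictConvexOn_univ_of_deriv (continuous_abs_rpow hq) ?_
    rw [show (deriv fun x : ℝ => |x| ^ q) = fun t => q * signedPow q t from
      funext fun t => (hasDerivAt_abs_rpow_signedPow hq t).deriv]
    exact (strictMono_signedPow hq).const_mul (by linarith)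
  rcases lt_or_gt_of_ne hab with h | h
  · have := hconv.lt_slope_of_hasDerivAt (Set.mem_univ a) (Set.mem_univ b) h
      (hasDerivAt_abs_rpow_signedPow hq a)
    rw [slope_def_field, lt_div_iff₀ (by linarith)] at this
    linarith
  · have := hconv.slope_lt_of_hasDerivAt (Set.mem_univ b) (Set.mem_univ a) h
      (hasDerivAt_abs_rpow_signedPow hq a)
    rw [slope_def_field, div_lt_iff₀ (by linarith)] at this
    linarith

lemma abs_rpow_add_signedPow_mul_le {q : ℝ} (hq : 1 < q) (a b : ℝ) :
    |a| ^ q + q * (signedPow q a * (b - a)) ≤ |b| ^ q := by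
  rcases eq_or_ne a b with rfl | h
  · simp
  · exact (abs_rpow_add_signedPow_mul_lt hq h).le

lemma abs_sub_rpow_le {q : ℝ} (hq : 1 < q) (a b : ℝ) :
    |a - b| ^ q ≤ 2 ^ q * (|a| ^ q + |b| ^ q) := by
  have hq0 : 0 ≤ q := by linarith
  have h1 : |a - b| ≤ 2 * max |a| |b| := by
    have := abs_sub a b
    linarith [le_max_left |a| |b|, le_max_right |a| |b|]
  refine (Real.rpow_le_rpow (abs_nonneg _) h1 hq0).trans ?_
  rw [Real.mul_rpow (by norm_num) (le_max_of_le_left (abs_nonneg a))]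
  gcongr
  rcases max_cases |a| |b| with ⟨h, _⟩ | ⟨h, _⟩ <;> rw [h]
  · linarith [Real.rpow_nonneg (abs_nonneg b) q]
  · linarith [Real.rpow_nonneg (abs_nonneg a) q]

lemma abs_signedPow_mul_le {q : ℝ} (hq : 1 < q) (s t : ℝ) :
    |signedPow q s * t| ≤ |s| ^ q + |t| ^ q := by
  have key : ∀ u : ℝ, 0 ≤ u → u ^ (q - 1) * u = u ^ q := fun u hu => by
    rw [← Real.rpow_add_one' hu (by linarith)]
    ring_nf
  rw [abs_mul, abs_signedPow hq]
  rcases le_total |s| |t| with h | h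
  · calc |s| ^ (q - 1) * |t| ≤ |t| ^ (q - 1) * |t| := by gcongr
      _ = |t| ^ q := key _ (abs_nonneg t)
      _ ≤ _ := by linarith [Real.rpow_nonneg (abs_nonneg s) q]
  · calc |s| ^ (q - 1) * |t| ≤ |s| ^ (q - 1) * |s| := by gcongr
      _ = |s| ^ q := key _ (abs_nonneg s)
      _ ≤ _ := by linarith [Real.rpow_nonneg (abs_nonneg t) q]

section Integrability

variable {Ω : Type*} {mΩ : MeasurableSpace Ω} {μ : Measure Ω} {q : ℝ} {f k : Ω → ℝ}

lemma integrable_abs_sub_rpow (hq : 1 < q) (hf : Measurable f) (hk : Measurable k)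
    (hfi : Integrable (fun x => |f x| ^ q) μ) (hki : Integrable (fun x => |k x| ^ q) μ) :
    Integrable (fun x => |f x - k x| ^ q) μ := by
  refine ((hfi.add hki).const_mul (2 ^ q)).mono'
    ((continuous_abs_rpow hq).measurable.comp (hf.sub hk)).aestronglyMeasurable
    (.of_forall fun x => ?_)
  rw [Real.norm_of_nonneg (Real.rpow_nonneg (abs_nonneg _) _)]
  exact abs_sub_rpow_le hq _ _

lemma integrable_signedPow_mul (hq : 1 < q) (hf : Measurable f) (hk : Measurable k)
    (hfi : Integrable (fun x => |f x| ^ q) μ) (hki : Integrable (fun x => |k x| ^ q) μ) :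
    Integrable (fun x => signedPow q (f x) * k x) μ :=
  (hfi.add hki).mono'
    (((continuous_signedPow hq).measurable.comp hf).mul hk).aestronglyMeasurable
    (.of_forall fun _ => abs_signedPow_mul_le hq _ _)

lemma integrable_signedPow [IsFiniteMeasure μ] (hq : 1 < q) (hf : Measurable f)
    (hfi : Integrable (fun x => |f x| ^ q) μ) :
    Integrable (fun x => signedPow q (f x)) μ := by
  simpa using integrable_signedPow_mul (k := fun _ => 1) hq hf measurable_const hfi
    (integrable_const _)

lemma integrable_signedPow_sub_const [IsFiniteMeasure μ] (hq : 1 < q) (hf : Measurable f)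
    (hfi : Integrable (fun x => |f x| ^ q) μ) (a : ℝ) :
    Integrable (fun x => signedPow q (f x - a)) μ :=
  integrable_signedPow hq (hf.sub_const a)
    (integrable_abs_sub_rpow hq hf measurable_const hfi (integrable_const _))

lemma exists_integral_signedPow_sub_neg [IsProbabilityMeasure μ] (hq : 1 < q)
    (hf : Measurable f) (hfi : Integrable (fun x => |f x| ^ q) μ) :
    ∃ a, ∫ x, signedPow q (f x - a) ∂μ < 0 := by
  have hmono := (strictMono_signedPow hq).monotone
  have hmeas : ∀ n : ℕ, Measurable fun x => max (signedPow q (f x - n)) (-1) := fun n =>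
    ((continuous_signedPow hq).measurable.comp (hf.sub_const _)).max measurable_const
  have hbd : ∀ (n : ℕ) (x : Ω),
      ‖max (signedPow q (f x - n)) (-1)‖ ≤ |signedPow q (f x)| + 1 := fun n x => by
    have h1 : signedPow q (f x - n) ≤ signedPow q (f x) :=
      hmono (by linarith [Nat.cast_nonneg (α := ℝ) n])
    rw [Real.norm_eq_abs, abs_le]
    refine ⟨by linarith [le_max_right (signedPow q (f x - n)) (-1),
      abs_nonneg (signedPow q (f x))], max_le ?_ ?_⟩
    · linarith [le_abs_self (signedPow q (f x))]
    · linarith [abs_nonneg (signedPow q (f x))]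
  have hbdi : Integrable (fun x => |signedPow q (f x)| + 1) μ :=
    (integrable_signedPow hq hf hfi).abs.add (integrable_const 1)
  have hlim : Tendsto (fun n : ℕ => ∫ x, max (signedPow q (f x - n)) (-1) ∂μ) atTop
      (𝓝 (∫ _, (-1 : ℝ) ∂μ)) := by
    refine tendsto_integral_of_dominated_convergence _
      (fun n => (hmeas n).aestronglyMeasurable) hbdi (fun n => .of_forall (hbd n))
      (.of_forall fun x => ?_)
    obtain ⟨n₀, hn₀⟩ := exists_nat_ge (f x + 1)
    refine tendsto_const_nhds.congr' ?_
    filter_upwards [eventually_ge_atTop n₀] with n hn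
    have hn' : (n₀ : ℝ) ≤ n := by exact_mod_cast hn
    have : signedPow q (f x - n) ≤ signedPow q (-1) := hmono (by linarith)
    rw [signedPow_neg, signedPow_of_nonneg hq zero_le_one, Real.one_rpow] at this
    exact (max_eq_right this).symm
  simp only [integral_const, probReal_univ, one_smul] at hlim
  obtain ⟨n, hn⟩ := (hlim.eventually (gt_mem_nhds (by norm_num : (-1 : ℝ) < 0))).exists
  refine ⟨n, lt_of_le_of_lt ?_ hn⟩
  exact integral_mono (integrable_signedPow_sub_const hq hf hfi n)
    (hbdi.mono' (hmeas n).aestronglyMeasurable (.of_forall (hbd n))) fun _ => le_max_left _ _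

lemma continuous_integral_signedPow_sub [IsProbabilityMeasure μ] (hq : 1 < q)
    (hf : Measurable f) (hfi : Integrable (fun x => |f x| ^ q) μ) :
    Continuous fun a => ∫ x, signedPow q (f x - a) ∂μ := by
  have hmono := (strictMono_signedPow hq).monotone
  refine continuous_iff_continuousAt.2 fun a₀ => ?_
  have hint := integrable_signedPow_sub_const hq hf hfi
  refine continuousAt_of_dominated
    (bound := fun x => |signedPow q (f x - (a₀ - 1))| + |signedPow q (f x - (a₀ + 1))|)
    (.of_forall fun a => (hint a).aestronglyMeasurable) ?_
    ((hint _).abs.add (hint _).abs) (.of_forall fun x => ?_)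
  · filter_upwards [Ioo_mem_nhds (sub_one_lt a₀) (lt_add_one a₀)] with a ha
    refine .of_forall fun x => ?_
    have h1 : signedPow q (f x - a) ≤ signedPow q (f x - (a₀ - 1)) := hmono (by linarith [ha.1])
    have h2 : signedPow q (f x - (a₀ + 1)) ≤ signedPow q (f x - a) := hmono (by linarith [ha.2])
    rw [Real.norm_eq_abs, abs_le]
    constructor
    · linarith [neg_abs_le (signedPow q (f x - (a₀ + 1))),
        abs_nonneg (signedPow q (f x - (a₀ - 1)))]
    · linarith [le_abs_self (signedPow q (f x - (a₀ - 1))),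
        abs_nonneg (signedPow q (f x - (a₀ + 1)))]
  · exact ((continuous_signedPow hq).comp (continuous_const.sub continuous_id)).continuousAt

lemma strictAnti_integral_signedPow_sub [IsProbabilityMeasure μ] (hq : 1 < q)
    (hf : Measurable f) (hfi : Integrable (fun x => |f x| ^ q) μ) :
    StrictAnti fun a => ∫ x, signedPow q (f x - a) ∂μ := by
  intro a b hab
  have hint := integrable_signedPow_sub_const hq hf hfi
  have hlt : ∀ x, signedPow q (f x - b) < signedPow q (f x - a) :=
    fun x => strictMono_signedPow hq (by linarith)
  have hpos : 0 < ∫ x, (signedPow q (f x - a) - signedPow q (f x - b)) ∂μ := by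
    rw [integral_pos_iff_support_of_nonneg (fun x => (sub_pos.2 (hlt x)).le)
      ((hint a).sub (hint b))]
    rw [show Function.support (fun x => signedPow q (f x - a) - signedPow q (f x - b)) =
      Set.univ from Set.eq_univ_of_forall fun x => (sub_pos.2 (hlt x)).ne']
    simp
  rw [integral_sub (hint a) (hint b)] at hpos
  exact sub_pos.1 hpos

/-- A random variable with a finite `q`-th moment has a `q`-mean. -/
lemma exists_integral_signedPow_sub_eq_zero [IsProbabilityMeasure μ] (hq : 1 < q)
    (hf : Measurable f) (hfi : Integrable (fun x => |f x| ^ q) μ) :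
    ∃ a, ∫ x, signedPow q (f x - a) ∂μ = 0 := by
  obtain ⟨a, ha⟩ := exists_integral_signedPow_sub_neg hq hf hfi
  obtain ⟨b, hb⟩ := exists_integral_signedPow_sub_neg (f := fun x => -f x) hq hf.neg
    (by simpa using hfi)
  have hb' : 0 ≤ ∫ x, signedPow q (f x - -b) ∂μ := by
    have : ∀ x, signedPow q (-f x - b) = -signedPow q (f x - -b) := fun x => by
      rw [← signedPow_neg]
      ring_nf
    simp only [this, integral_neg] at hb
    linarith
  exact mem_range_of_exists_le_of_exists_ge (continuous_integral_signedPow_sub hq hf hfi)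
    ⟨a, ha.le⟩ ⟨-b, hb'⟩

end Integrability

section Projection

variable {Ω β : Type*} {m mΩ : MeasurableSpace Ω} {mβ : MeasurableSpace β} {μ : Measure Ω} {q : ℝ}

/-- The `q`-means of a Markov kernel can be selected measurably. -/
lemma exists_measurable_integral_signedPow_sub_eq_zero (hq : 1 < q) (κ : Kernel β ℝ)
    [IsMarkovKernel κ] :
    ∃ H : β → ℝ, Measurable H ∧ ∀ b, Integrable (fun y => |y| ^ q) (κ b) →
      ∫ y, signedPow q (y - H b) ∂κ b = 0 := by
  classical
  have hex : ∀ b, ∃ a, Integrable (fun y => |y| ^ q) (κ b) →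
      ∫ y, signedPow q (y - a) ∂κ b = 0 := fun b => by
    by_cases hb : Integrable (fun y => |y| ^ q) (κ b)
    · obtain ⟨a, ha⟩ := exists_integral_signedPow_sub_eq_zero (f := fun y => y) hq measurable_id hb
      exact ⟨a, fun _ => ha⟩
    · exact ⟨0, fun h => absurd h hb⟩
  choose K hK using hex
  set G : Set β := {b | Integrable (fun y => |y| ^ q) (κ b)}
  have hG : MeasurableSet G :=
    measurableSet_integrable (continuous_abs_rpow hq).stronglyMeasurable
  refine ⟨fun b => if b ∈ G then K b else 0, measurable_of_Ioi fun a => ?_, fun b hb => ?_⟩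
  · have hΦ : Measurable fun b => ∫ y, signedPow q (y - a) ∂κ b :=
      (StronglyMeasurable.integral_kernel ((continuous_signedPow hq).comp
        (continuous_id.sub continuous_const)).stronglyMeasurable).measurable
    have hset : (fun b => if b ∈ G then K b else 0) ⁻¹' Ioi a =
        G ∩ {b | 0 < ∫ y, signedPow q (y - a) ∂κ b} ∪ Gᶜ ∩ {_b | a < 0} := by
      ext b
      by_cases hb : b ∈ G
      · have := (strictAnti_integral_signedPow_sub (f := fun y => y) (μ := κ b) hq
          measurable_id hb).lt_iff_gt (a := K b) (b := a)
        simp only [hK b hb] at this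
        simp [hb, this]
      · simp [hb]
    rw [hset]
    exact (hG.inter (measurableSet_lt measurable_const hΦ)).union (hG.compl.inter (.const _))
  · have hb' : b ∈ G := hb
    simpa [hb'] using hK b hb

lemma abs_rpow_le_integral_of_integral_signedPow_sub_eq_zero (hq : 1 < q) {ν : Measure ℝ}
    [IsProbabilityMeasure ν] (hν : Integrable (fun y => |y| ^ q) ν) {a : ℝ}
    (ha : ∫ y, signedPow q (y - a) ∂ν = 0) :
    |a| ^ q ≤ 2 ^ q * 2 * ∫ y, |y| ^ q ∂ν := by
  have h1 : Integrable (fun y => signedPow q (y - a)) ν :=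
    integrable_signedPow_sub_const hq measurable_id hν a
  have h2 : Integrable (fun y => |y - a| ^ q) ν :=
    integrable_abs_sub_rpow hq measurable_id measurable_const hν (integrable_const _)
  have hle : ∫ y, (|y - a| ^ q + q * (signedPow q (y - a) * a)) ∂ν ≤ ∫ y, |y| ^ q ∂ν :=
    integral_mono (h2.add ((h1.mul_const a).const_mul q)) hν fun y => by
      simpa using abs_rpow_add_signedPow_mul_le hq (y - a) y
  rw [integral_add h2 ((h1.mul_const a).const_mul q), integral_const_mul, integral_mul_const,
    ha, zero_mul, mul_zero, add_zero] at hle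
  have hle' : ∫ _, |a| ^ q ∂ν ≤ ∫ y, 2 ^ q * (|y| ^ q + |y - a| ^ q) ∂ν :=
    integral_mono (integrable_const _) ((hν.add h2).const_mul _) fun y => by
      simpa using abs_sub_rpow_le hq y (y - a)
  rw [integral_const_mul, integral_add hν h2, integral_const, probReal_univ, one_smul] at hle'
  refine hle'.trans ?_
  rw [mul_assoc]
  gcongr
  linarith

/-- Existence of the `L^q` projection of `Y` onto the functions of `X`, characterised by its
first-order condition. -/
lemma exists_condExp_signedPow_sub_eq_zero [IsProbabilityMeasure μ] (hq : 1 < q) {X : Ω → β}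
    (hX : Measurable X) {Y : Ω → ℝ} (hY : Measurable Y)
    (hYi : Integrable (fun x => |Y x| ^ q) μ) :
    ∃ H : β → ℝ, Measurable H ∧ Integrable (fun x => |H (X x)| ^ q) μ ∧
      μ[fun x => signedPow q (Y x - H (X x)) | mβ.comap X] =ᵐ[μ] 0 := by
  obtain ⟨H, hH, hH0⟩ :=
    exists_measurable_integral_signedPow_sub_eq_zero hq (condDistrib Y X μ)
  have hcont := continuous_abs_rpow hq
  have hint : ∀ᵐ x ∂μ, Integrable (fun y => |y| ^ q) (condDistrib Y X μ (X x)) := by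
    have h := (integrable_map_measure (f := fun x => (X x, Y x)) (μ := μ)
      (g := fun z : β × ℝ => |z.2| ^ q)
      (hcont.measurable.comp measurable_snd).aestronglyMeasurable
      (hX.prodMk hY).aemeasurable).2 hYi
    exact h.condDistrib_ae hX.aemeasurable hY.aemeasurable
  have hmoment := condExp_ae_eq_integral_condDistrib (μ := μ) hX hY.aemeasurable
    (f := fun y : ℝ => |y| ^ q) hcont.stronglyMeasurable hYi
  have hHi : Integrable (fun x => |H (X x)| ^ q) μ := by
    refine ((integrable_condExp (m := mβ.comap X) (μ := μ)
      (f := fun x => |Y x| ^ q)).const_mul (2 ^ q * 2)).mono'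
      (hcont.measurable.comp (hH.comp hX)).aestronglyMeasurable ?_
    filter_upwards [hint, hmoment] with x hx hx'
    rw [hx', Real.norm_of_nonneg (Real.rpow_nonneg (abs_nonneg _) _)]
    exact abs_rpow_le_integral_of_integral_signedPow_sub_eq_zero hq hx (hH0 _ hx)
  refine ⟨H, hH, hHi, ?_⟩
  have hvi := integrable_signedPow hq (hY.sub (hH.comp hX))
    (integrable_abs_sub_rpow hq hY (hH.comp hX) hYi hHi)
  have hv : StronglyMeasurable fun z : β × ℝ => signedPow q (z.2 - H z.1) :=
    ((continuous_signedPow hq).measurable.comp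
      (measurable_snd.sub (hH.comp measurable_fst))).stronglyMeasurable
  filter_upwards [hint, condExp_prod_ae_eq_integral_condDistrib hX hY.aemeasurable hv hvi]
    with x hx hx'
  rw [hx', Pi.zero_apply, hH0 _ hx]

variable {Y h k : Ω → ℝ}

lemma integral_signedPow_sub_mul_eq_zero [IsFiniteMeasure μ] (hq : 1 < q) (hm : m ≤ mΩ)
    (hY : Measurable Y) (hh : Measurable h) (hk : Measurable[m] k)
    (hYi : Integrable (fun x => |Y x| ^ q) μ) (hhi : Integrable (fun x => |h x| ^ q) μ)
    (hki : Integrable (fun x => |k x| ^ q) μ)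
    (hfoc : μ[fun x => signedPow q (Y x - h x) | m] =ᵐ[μ] 0) :
    ∫ x, signedPow q (Y x - h x) * k x ∂μ = 0 := by
  have hdi := integrable_abs_sub_rpow hq hY hh hYi hhi
  have hpull : μ[fun x => signedPow q (Y x - h x) * k x | m] =ᵐ[μ]
      μ[fun x => signedPow q (Y x - h x) | m] * k :=
    condExp_mul_of_stronglyMeasurable_right (μ := μ) hk.stronglyMeasurable
      (integrable_signedPow_mul hq (hY.sub hh) (hk.mono hm le_rfl) hdi hki)
      (integrable_signedPow hq (hY.sub hh) hdi)
  rw [← integral_condExp hm]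
  refine integral_eq_zero_of_ae (hpull.trans ?_)
  filter_upwards [hfoc] with x hx
  rw [Pi.mul_apply, hx, Pi.zero_apply, zero_mul]

/-- The first-order condition implies optimality, and uniqueness of the optimizer. -/
lemma integral_abs_sub_rpow_le_and_ae_eq [IsFiniteMeasure μ] (hq : 1 < q) (hm : m ≤ mΩ)
    (hY : Measurable Y) (hh : Measurable[m] h) (hk : Measurable[m] k)
    (hYi : Integrable (fun x => |Y x| ^ q) μ) (hhi : Integrable (fun x => |h x| ^ q) μ)
    (hki : Integrable (fun x => |k x| ^ q) μ)
    (hfoc : μ[fun x => signedPow q (Y x - h x) | m] =ᵐ[μ] 0) :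
    ∫ x, |Y x - h x| ^ q ∂μ ≤ ∫ x, |Y x - k x| ^ q ∂μ ∧
      (∫ x, |Y x - k x| ^ q ∂μ = ∫ x, |Y x - h x| ^ q ∂μ → k =ᵐ[μ] h) := by
  have hh' := hh.mono hm le_rfl
  have hk' := hk.mono hm le_rfl
  have hdi := integrable_abs_sub_rpow hq hh' hk' hhi hki
  have hYh := integrable_abs_sub_rpow hq hY hh' hYi hhi
  have hYk := integrable_abs_sub_rpow hq hY hk' hYi hki
  have hprod : Integrable (fun x => signedPow q (Y x - h x) * (h x - k x)) μ :=
    integrable_signedPow_mul hq (hY.sub hh') (hh'.sub hk') hYh hdi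
  have hzero := integral_signedPow_sub_mul_eq_zero hq hm hY hh' (hh.sub hk) hYi hhi hdi hfoc
  have hlin : Integrable (fun x => |Y x - h x| ^ q +
      q * (signedPow q (Y x - h x) * (h x - k x))) μ := hYh.add (hprod.const_mul q)
  have hlin_eq : ∫ x, (|Y x - h x| ^ q + q * (signedPow q (Y x - h x) * (h x - k x))) ∂μ =
      ∫ x, |Y x - h x| ^ q ∂μ := by
    rw [integral_add hYh (hprod.const_mul q), integral_const_mul]
    simp only [Pi.sub_apply] at hzero
    rw [hzero, mul_zero, add_zero]
  have hle : ∀ x, |Y x - h x| ^ q + q * (signedPow q (Y x - h x) * (h x - k x)) ≤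
      |Y x - k x| ^ q := fun x => by
    simpa using abs_rpow_add_signedPow_mul_le hq (Y x - h x) (Y x - k x)
  refine ⟨hlin_eq ▸ integral_mono hlin hYk hle, fun heq => ?_⟩
  have hae := (integral_eq_iff_of_ae_le hlin hYk (.of_forall hle)).1 (hlin_eq.trans heq.symm)
  filter_upwards [hae] with x hx
  by_contra hne
  have := abs_rpow_add_signedPow_mul_lt hq (a := Y x - h x) (b := Y x - k x)
    fun h' => hne (by linarith)
  rw [sub_sub_sub_cancel_left] at this
  exact this.ne hx

end Projection

lemma lpnorm_rpow {d : ℕ} {e : ℝ} (he : 0 < e) (v : Fin d → ℝ) :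
    lpnorm e v ^ e = ∑ i, |v i| ^ e := by
  rw [lpnorm, ← Real.rpow_mul (Finset.sum_nonneg fun i _ => Real.rpow_nonneg (abs_nonneg _) _),
    one_div_mul_cancel he.ne', Real.rpow_one]

lemma Fn_le (N d n : ℕ) : Fn N d n ≤ (inferInstance : MeasurableSpace (PathD N d)) := by
  refine Measurable.comap_le (measurable_pi_lambda _ fun i => ?_)
  split_ifs
  · exact measurable_pi_apply i
  · exact measurable_const

lemma integrable_lpnorm_rpow_iff {N d : ℕ} {q : ℝ} (hq : 1 < q) {μ : Measure (PathD N d)}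
    {f : PathD N d → Fin d → ℝ} (hf : Measurable f) :
    Integrable (fun x => lpnorm q (f x) ^ q) μ ↔ ∀ i, Integrable (fun x => |f x i| ^ q) μ := by
  simp only [lpnorm_rpow (zero_lt_one.trans hq)]
  refine ⟨fun h i => h.mono' ((continuous_abs_rpow hq).measurable.comp
    ((measurable_pi_apply i).comp hf)).aestronglyMeasurable (.of_forall fun x => ?_),
    fun h => integrable_finsetSum _ fun i _ => h i⟩
  rw [Real.norm_of_nonneg (Real.rpow_nonneg (abs_nonneg _) _)]
  exact Finset.single_le_sum (f := fun i => |f x i| ^ q)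
    (fun j _ => Real.rpow_nonneg (abs_nonneg _) _) (Finset.mem_univ i)

lemma integral_lpnorm_sub_rpow {N d : ℕ} {q : ℝ} (hq : 1 < q) {μ : Measure (PathD N d)}
    {f k : PathD N d → Fin d → ℝ} (hf : Measurable f) (hk : Measurable k)
    (hfi : Integrable (fun x => lpnorm q (f x) ^ q) μ)
    (hki : Integrable (fun x => lpnorm q (k x) ^ q) μ) :
    ∫ x, lpnorm q (f x - k x) ^ q ∂μ = ∑ i, ∫ x, |f x i - k x i| ^ q ∂μ := by
  simp only [lpnorm_rpow (zero_lt_one.trans hq), Pi.sub_apply]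
  exact integral_finsetSum _ fun i _ => integrable_abs_sub_rpow hq
    ((measurable_pi_apply i).comp hf) ((measurable_pi_apply i).comp hk)
    ((integrable_lpnorm_rpow_iff hq hf).1 hfi i) ((integrable_lpnorm_rpow_iff hq hk).1 hki i)

lemma condExp_pi_ae_eq_zero {Ω ι : Type*} [Fintype ι] {m mΩ : MeasurableSpace Ω}
    {μ : Measure Ω} {f : Ω → ι → ℝ} (hf : ∀ i, Integrable (fun x => f x i) μ)
    (h : ∀ i, μ[fun x => f x i | m] =ᵐ[μ] 0) : μ[f | m] =ᵐ[μ] 0 := by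
  filter_upwards [ae_all_iff.2 h, ae_all_iff.2 fun i =>
    (ContinuousLinearMap.proj (R := ℝ) (φ := fun _ : ι => ℝ) i).comp_condExp_comm (m := m)
      (Integrable.of_eval hf)] with x hx hx'
  funext i
  exact (hx' i).trans (hx i)

/-- The `L^q` projection onto the `F_n`-measurable functions on path space. -/
lemma exists_Lq_projection {N d : ℕ} {q : ℝ} (hq : 1 < q) (μ : Measure (PathD N d))
    [IsProbabilityMeasure μ] (n : ℕ) {g : PathD N d → Fin d → ℝ} (hg : Measurable g)
    (hgi : Integrable (fun x => lpnorm q (g x) ^ q) μ) :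
    ∃ h : PathD N d → Fin d → ℝ, Measurable[Fn N d n] h ∧
      Integrable (fun x => lpnorm q (h x) ^ q) μ ∧
      (∀ k : PathD N d → Fin d → ℝ, Measurable[Fn N d n] k →
        Integrable (fun x => lpnorm q (k x) ^ q) μ →
        ∫ x, lpnorm q (g x - h x) ^ q ∂μ ≤ ∫ x, lpnorm q (g x - k x) ^ q ∂μ ∧
        (∫ x, lpnorm q (g x - k x) ^ q ∂μ = ∫ x, lpnorm q (g x - h x) ^ q ∂μ → k =ᵐ[μ] h)) ∧
      μ[fun x => vmap q (g x - h x) | Fn N d n] =ᵐ[μ] 0 := by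
  have hgc : ∀ i, Measurable fun x => g x i := fun i => (measurable_pi_apply i).comp hg
  have hgci := (integrable_lpnorm_rpow_iff hq hg).1 hgi
  have hX : Measurable fun (x : PathD N d) (i : Fin N) => if (i : ℕ) + 1 ≤ n then x i else 0 :=
    measurable_iff_comap_le.2 (Fn_le N d n)
  choose H hH hHi hfoc using fun i => exists_condExp_signedPow_sub_eq_zero hq hX (hgc i) (hgci i)
  set h : PathD N d → Fin d → ℝ := fun x i => H i fun j => if (j : ℕ) + 1 ≤ n then x j else 0
  have hhc : ∀ i, Measurable[Fn N d n] fun x => h x i :=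
    fun i => (hH i).comp (comap_measurable _)
  have hhm : Measurable[Fn N d n] h :=
    @measurable_pi_lambda _ _ _ (Fn N d n) _ _ hhc
  have hh := hhm.mono (Fn_le N d n) le_rfl
  have hhi := (integrable_lpnorm_rpow_iff hq hh).2 hHi
  refine ⟨h, hhm, hhi, fun k hkm hki => ?_, ?_⟩
  · have hk := hkm.mono (Fn_le N d n) le_rfl
    have hkc : ∀ i, Measurable[Fn N d n] fun x => k x i := fun i => (measurable_pi_apply i).comp hkm
    have hopt := fun i => integral_abs_sub_rpow_le_and_ae_eq hq (Fn_le N d n) (hgc i) (hhc i)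
      (hkc i) (hgci i) (hHi i) ((integrable_lpnorm_rpow_iff hq hk).1 hki i) (hfoc i)
    rw [integral_lpnorm_sub_rpow hq hg hh hgi hhi, integral_lpnorm_sub_rpow hq hg hk hgi hki]
    refine ⟨Finset.sum_le_sum fun i _ => (hopt i).1, fun heq => ?_⟩
    have heq' := (Finset.sum_eq_sum_iff_of_le fun i _ => (hopt i).1).1 heq.symm
    filter_upwards [ae_all_iff.2 fun i => (hopt i).2 (heq' i (Finset.mem_univ i)).symm] with x hx
    exact funext hx
  · have hhc' : ∀ i, Measurable fun x => h x i := fun i => (hhc i).mono (Fn_le N d n) le_rfl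
    exact condExp_pi_ae_eq_zero (fun i => integrable_signedPow hq ((hgc i).sub (hhc' i))
      (integrable_abs_sub_rpow hq (hgc i) (hhc' i) (hgci i) (hHi i))) hfoc

/-- The `L^q` predictable projection: for adapted `g = (g_n)` with finite
`q`-moments, the functional `J[h] = Σ_n E_μ[|g_n − h_n|_*^q]` attains its infimum over the set
of predictable `h ∈ L^q(μ)` at some `h*`, unique up to modification on `μ`-null sets, and the
minimizer satisfies the first-order condition `E_μ[v(g_n − h*_n) | F_{n−1}] = 0` a.s. -/
theorem statement_13 {N d : ℕ} (p q : ℝ) (hp : 1 < p) (hq : q = p / (p - 1))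
    (μ : Measure (PathD N d)) [IsProbabilityMeasure μ]
    (g : ℕ → PathD N d → Fin d → ℝ)
    (hgmeas : ∀ n : ℕ, 1 ≤ n → n ≤ N → Measurable[Fn N d n] (g n))
    (hgint : ∀ n : ℕ, 1 ≤ n → n ≤ N → Integrable (fun x => lpnorm q (g n x) ^ q) μ) :
    ∃ hstar : ℕ → PathD N d → Fin d → ℝ,
      IsPredictable hstar ∧
      (∀ n : ℕ, 1 ≤ n → n ≤ N → Integrable (fun x => lpnorm q (hstar n x) ^ q) μ) ∧
      (∀ h : ℕ → PathD N d → Fin d → ℝ, IsPredictable h →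
        (∀ n : ℕ, 1 ≤ n → n ≤ N → Integrable (fun x => lpnorm q (h n x) ^ q) μ) →
        (∑ n ∈ Finset.Icc 1 N, ∫ x, lpnorm q (g n x - hstar n x) ^ q ∂μ) ≤
          ∑ n ∈ Finset.Icc 1 N, ∫ x, lpnorm q (g n x - h n x) ^ q ∂μ) ∧
      (∀ h : ℕ → PathD N d → Fin d → ℝ, IsPredictable h →
        (∀ n : ℕ, 1 ≤ n → n ≤ N → Integrable (fun x => lpnorm q (h n x) ^ q) μ) →
        (∑ n ∈ Finset.Icc 1 N, ∫ x, lpnorm q (g n x - h n x) ^ q ∂μ) =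
          (∑ n ∈ Finset.Icc 1 N, ∫ x, lpnorm q (g n x - hstar n x) ^ q ∂μ) →
        ∀ n : ℕ, 1 ≤ n → n ≤ N → h n =ᵐ[μ] hstar n) ∧
      (∀ n : ℕ, 1 ≤ n → n ≤ N →
        (μ[(fun x => vmap q (g n x - hstar n x)) | Fn N d (n - 1)]) =ᵐ[μ] 0) := by
  have hq1 : 1 < q := by
    rw [hq, lt_div_iff₀ (by linarith)]
    linarith
  have hproj : ∀ n : ℕ, ∃ h : PathD N d → Fin d → ℝ, 1 ≤ n → n ≤ N →
      Measurable[Fn N d (n - 1)] h ∧ Integrable (fun x => lpnorm q (h x) ^ q) μ ∧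
      (∀ k : PathD N d → Fin d → ℝ, Measurable[Fn N d (n - 1)] k →
        Integrable (fun x => lpnorm q (k x) ^ q) μ →
        ∫ x, lpnorm q (g n x - h x) ^ q ∂μ ≤ ∫ x, lpnorm q (g n x - k x) ^ q ∂μ ∧
        (∫ x, lpnorm q (g n x - k x) ^ q ∂μ = ∫ x, lpnorm q (g n x - h x) ^ q ∂μ →
          k =ᵐ[μ] h)) ∧
      μ[fun x => vmap q (g n x - h x) | Fn N d (n - 1)] =ᵐ[μ] 0 := fun n => by
    by_cases hn : 1 ≤ n ∧ n ≤ N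
    · obtain ⟨h, hh⟩ := exists_Lq_projection hq1 μ (n - 1)
        ((hgmeas n hn.1 hn.2).mono (Fn_le N d n) le_rfl) (hgint n hn.1 hn.2)
      exact ⟨h, fun _ _ => hh⟩
    · exact ⟨0, fun h1 h2 => absurd ⟨h1, h2⟩ hn⟩
  choose hstar hs using hproj
  have hle : ∀ h : ℕ → PathD N d → Fin d → ℝ, IsPredictable h →
      (∀ n : ℕ, 1 ≤ n → n ≤ N → Integrable (fun x => lpnorm q (h n x) ^ q) μ) →
      ∀ n ∈ Finset.Icc 1 N, ∫ x, lpnorm q (g n x - hstar n x) ^ q ∂μ ≤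
        ∫ x, lpnorm q (g n x - h n x) ^ q ∂μ := fun h hp hi n hn => by
    obtain ⟨h1, h2⟩ := Finset.mem_Icc.1 hn
    exact ((hs n h1 h2).2.2.1 (h n) (hp n h1 h2) (hi n h1 h2)).1
  refine ⟨hstar, fun n h1 h2 => (hs n h1 h2).1, fun n h1 h2 => (hs n h1 h2).2.1,
    fun h hp hi => Finset.sum_le_sum (hle h hp hi), fun h hp hi heq n h1 h2 => ?_,
    fun n h1 h2 => (hs n h1 h2).2.2.2⟩
  have heq' := (Finset.sum_eq_sum_iff_of_le (hle h hp hi)).1 heq.symm n (Finset.mem_Icc.2 ⟨h1, h2⟩)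
  exact ((hs n h1 h2).2.2.1 (h n) (hp n h1 h2) (hi n h1 h2)).2 heq'.symm
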